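/- arXiv:2112.02802 — 3 statements merged into one kernel-verified Lean document; each statement's English description precedes it below -/
import Mathlib

section
/- Assume: (1) θ*_i ≠ θ*_j for all i ≠ j; (2) x_kᵀ(θ*_i − θ*_j) ≠ 0 for every k ∈ {1,…,N} and every pair i ≠ j; (3) there exists a permutation (p_1,…,p_S) of (1,…,S) such that for every m ∈ {1,…,S} and every partition of C*_{p_m} into at most S − m + 1 pairwise disjoint (possibly empty) subsets, at least one subset A of the partition has an invertible Gram matrix ∑_{k∈A} x_k x_kᵀ. Then the data determine the system uniquely up to relabeling: for any θ_1,…,θ_S ∈ ℝⁿ and any switching sequence ζ : {1,…,N} → {1,…,S} satisfying y_k = x_kᵀθ_{ζ_k} for all k = 1,…,N, there exists a permutation σ of {1,…,S} such that θ_{σ(s)} = θ*_s for all s and ζ_k = σ(ζ*_k) for all k. -/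
/-!
Identify the true parameters in the order `p 0, p 1, …`. If `θs (p m')` has been found among the
`θ i` for every `m' < m`, then at least `m` labels are used up, and by the separation condition `hx`
no datum of subsystem `p m` can carry one of them. Hence `ζ` splits the data of subsystem `p m` into
at most `S - m` classes, one of which has an invertible Gram matrix; on that class both parameters
give the same outputs, so they agree (`eq_of_isUnit_gram`). The resulting map of labels is injective
because the true parameters are distinct, hence a permutation, and `hx` then determines `ζ`.
-/

open Matrix Finset

/-- Two parameters with the same outputs on an index set with invertible Gram matrix coincide. -/
lemma eq_of_isUnit_gram {ι : Type*} {n : ℕ} (x : ι → Fin n → ℝ) (A : Finset ι)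
    (hA : IsUnit (∑ k ∈ A, vecMulVec (x k) (x k))) (u v : Fin n → ℝ)
    (h : ∀ k ∈ A, x k ⬝ᵥ u = x k ⬝ᵥ v) : u = v := by
  apply Matrix.mulVec_injective_of_isUnit hA
  simp only [Matrix.sum_mulVec, Matrix.vecMulVec_mulVec]
  exact Finset.sum_congr rfl fun k hk => by rw [h k hk]

/-- A set of at least `m` labels out of `S` leaves so few others that they embed in
`Fin (S - m)`; the embedding is given as a total map, injective off the set. -/
lemma exists_injOn_compl {S : ℕ} (m : Fin S) (U : Finset (Fin S)) (hU : m.val ≤ U.card) :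
    ∃ e : Fin S → Fin (S - m.val), ∀ i j, i ∉ U → j ∉ U → e i = e j → i = j := by
  have hcard : Fintype.card {i // i ∉ U} ≤ Fintype.card (Fin (S - m.val)) := by
    rw [Fintype.card_subtype_compl]
    simp only [Fintype.card_fin, Fintype.card_coe]
    omega
  obtain ⟨f⟩ := Function.Embedding.nonempty_of_card_le hcard
  refine ⟨fun i => if h : i ∉ U then f ⟨i, h⟩ else ⟨0, by omega⟩, fun i j hi hj hij => ?_⟩
  simp only [hi, hj, not_false_eq_true, dite_true] at hij
  exact congrArg Subtype.val (f.injective hij)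

/-- Theorem 1: the new persistence-of-excitation condition guarantees uniqueness of the
parameters and the switching sequence up to a permutation of the subsystem labels. -/
theorem stmt_2 {n S N : ℕ}
    (x : Fin N → Fin n → ℝ) (θs : Fin S → Fin n → ℝ) (ζs : Fin N → Fin S)
    (y : Fin N → ℝ) (hy : ∀ k, y k = x k ⬝ᵥ θs (ζs k))
    (hθ : ∀ i j, i ≠ j → θs i ≠ θs j)
    (hx : ∀ k, ∀ i j, i ≠ j → x k ⬝ᵥ (θs i - θs j) ≠ 0)
    (hPE : ∃ p : Equiv.Perm (Fin S), ∀ m : Fin S,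
      ∀ A : Fin (S - m.val) → Finset (Fin N),
        (∀ i j, i ≠ j → Disjoint (A i) (A j)) →
        Finset.univ.filter (fun k => ζs k = p m) = Finset.univ.biUnion A →
        ∃ i, IsUnit (∑ k ∈ A i, vecMulVec (x k) (x k)))
    (θ : Fin S → Fin n → ℝ) (ζ : Fin N → Fin S)
    (hfit : ∀ k, y k = x k ⬝ᵥ θ (ζ k)) :
    ∃ σ : Equiv.Perm (Fin S), (∀ s, θ (σ s) = θs s) ∧ ∀ k, ζ k = σ (ζs k) := by
  obtain ⟨p, hp⟩ := hPE
  have hinj : Function.Injective θs := fun i j h => by_contra fun hij => hθ i j hij h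
  have hlabel : ∀ k s, θ (ζ k) = θs s → s = ζs k := fun k s h => by
    by_contra hne
    apply hx k s (ζs k) hne
    rw [dotProduct_sub, ← hy, hfit, h, sub_self]
  have hfound : ∀ m : Fin S, ∃ i, θ i = θs (p m) := by
    intro m
    induction m using WellFoundedLT.induction with
    | ind m ih =>
    choose f hf using ih
    classical
    set U : Finset (Fin S) := univ.filter (fun i => ∃ m', m' < m ∧ θ i = θs (p m')) with hUdef
    have hU : m.val ≤ U.card := by
      have h : (Finset.Iio m).attach.card ≤ U.card := by
        apply Finset.card_le_card_of_injOn
          (fun a => f a.1 (Finset.mem_Iio.1 a.2))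
        · intro a _
          simp only [hUdef, Finset.coe_filter, Finset.mem_univ, true_and, Set.mem_ofPred_eq]
          exact ⟨a.1, Finset.mem_Iio.1 a.2, hf _ _⟩
        · intro a _ b _ hab
          have h := congrArg θ hab
          simp only [hf] at h
          exact Subtype.ext (p.injective (hinj h))
      simpa using h
    obtain ⟨e, he⟩ := exists_injOn_compl m U hU
    have hnot : ∀ k, ζs k = p m → ζ k ∉ U := by
      intro k hk hmem
      obtain ⟨m', hlt, hm'⟩ := (Finset.mem_filter.1 hmem).2
      exact hlt.ne (p.injective ((hlabel k _ hm').trans hk))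
    obtain ⟨c, hc⟩ := hp m (fun c => univ.filter (fun k => ζs k = p m ∧ e (ζ k) = c))
      (fun i j hij => Finset.disjoint_left.2 fun k hi hj =>
        hij ((Finset.mem_filter.1 hi).2.2.symm.trans (Finset.mem_filter.1 hj).2.2))
      (by ext k; simp)
    -- An empty class can have an invertible Gram matrix (when `n = 0`); any label then serves.
    obtain ⟨i, hi⟩ : ∃ i, ∀ k, ζs k = p m ∧ e (ζ k) = c → ζ k = i := by
      by_cases hex : ∃ k, ζs k = p m ∧ e (ζ k) = c
      · obtain ⟨k₀, h₀, h₀'⟩ := hex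
        exact ⟨ζ k₀, fun k hk => he _ _ (hnot k hk.1) (hnot k₀ h₀) (hk.2.trans h₀'.symm)⟩
      · exact ⟨m, fun k hk => (hex ⟨k, hk⟩).elim⟩
    refine ⟨i, eq_of_isUnit_gram x _ hc _ _ fun k hk => ?_⟩
    have hk' := (Finset.mem_filter.1 hk).2
    rw [← hi k hk', ← hk'.1, ← hfit, hy]
  choose g hg using hfound
  have hg' : ∀ s, θ (g (p.symm s)) = θs s := fun s => by rw [hg, p.apply_symm_apply]
  have hginj : Function.Injective (fun s => g (p.symm s)) := fun a b hab => by
    have h := congrArg θ hab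
    simp only [hg'] at h
    exact hinj h
  let σ : Equiv.Perm (Fin S) := Equiv.ofBijective _ (Finite.injective_iff_bijective.1 hginj)
  have hσ : ∀ s, θ (σ s) = θs s := hg'
  refine ⟨σ, hσ, fun k => ?_⟩
  rw [← hlabel k (σ.symm (ζ k)) (by rw [← hσ, σ.apply_symm_apply]), σ.apply_symm_apply]
end

section
/- Fix any θ_1,…,θ_S ∈ ℝⁿ and data x_1,…,x_N ∈ ℝⁿ, y_1,…,y_N ∈ ℝ. If ξ = (ξ_{s,k}) minimizes F(θ, ξ) = ∑_{k=1}^N [ ∑_{s=1}^S ξ_{s,k}(y_k − x_kᵀθ_s)² + (1 − ∑_{s=1}^S ξ_{s,k}²) ] over the feasible set {ξ : 0 ≤ ξ_{s,k} ≤ 1 and ∑_{s=1}^S ξ_{s,k} = 1 for every k}, then ξ_{s,k} ∈ {0,1} for all s and k (so for each k exactly one ξ_{s,k} equals 1). -/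
/-!
The cost separates over the samples `k`, so each column `p` of a minimizer is at least as good as
every vertex of the simplex: with `a s` the squared residual of model `s`,
`∑ s, p s * a s + (1 - ∑ s, p s ^ 2) ≤ a j` for all `j`. Averaging these inequalities with the
weights `p j` gives `1 - ∑ s, p s ^ 2 ≤ 0`, whereas `p s ^ 2 ≤ p s` and `∑ s, p s = 1`. Hence
`p s ^ 2 = p s` for every `s`, so `p` is a vertex.
-/

open Matrix Finset

/-- A point of the simplex whose penalized cost is at most that of every vertex is binary. -/
lemma binary_of_le_vertices {S : ℕ} (p a : Fin S → ℝ) (hp : ∀ s, 0 ≤ p s ∧ p s ≤ 1)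
    (hsum : ∑ s, p s = 1)
    (h : ∀ j, (∑ s, p s * a s) + (1 - ∑ s, p s ^ 2) ≤ a j) (s : Fin S) :
    p s = 0 ∨ p s = 1 := by
  have havg : ∑ j, p j * ((∑ s, p s * a s) + (1 - ∑ s, p s ^ 2)) ≤ ∑ j, p j * a j :=
    Finset.sum_le_sum fun j _ => mul_le_mul_of_nonneg_left (h j) (hp j).1
  rw [← Finset.sum_mul, hsum, one_mul] at havg
  have hnonneg : ∀ i ∈ Finset.univ, 0 ≤ p i - p i ^ 2 := fun i _ => by
    nlinarith [hp i]
  have hzero : ∑ i, (p i - p i ^ 2) = 0 := by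
    refine le_antisymm ?_ (Finset.sum_nonneg hnonneg)
    rw [Finset.sum_sub_distrib, hsum]
    linarith
  have hs := (Finset.sum_eq_zero_iff_of_nonneg hnonneg).1 hzero s (Finset.mem_univ s)
  have hs' : p s * (p s - 1) = 0 := by linarith
  rcases mul_eq_zero.1 hs' with h0 | h1
  · exact Or.inl h0
  · exact Or.inr (by linarith)

/-- Lemma: any minimizer over the relaxed feasible set of the penalized cost (for fixed
parameters) is binary: for each sample exactly one membership index equals one. -/
theorem stmt_4 {n S N : ℕ}
    (x : Fin N → Fin n → ℝ) (y : Fin N → ℝ) (θ : Fin S → Fin n → ℝ)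
    (ξ : Fin S → Fin N → ℝ)
    (hfeas : (∀ s k, 0 ≤ ξ s k ∧ ξ s k ≤ 1) ∧ ∀ k, ∑ s, ξ s k = 1)
    (hmin : ∀ ξ' : Fin S → Fin N → ℝ,
      ((∀ s k, 0 ≤ ξ' s k ∧ ξ' s k ≤ 1) ∧ ∀ k, ∑ s, ξ' s k = 1) →
      ∑ k, ((∑ s, ξ s k * (y k - x k ⬝ᵥ θ s) ^ 2) + (1 - ∑ s, (ξ s k) ^ 2)) ≤
        ∑ k, ((∑ s, ξ' s k * (y k - x k ⬝ᵥ θ s) ^ 2) + (1 - ∑ s, (ξ' s k) ^ 2))) :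
    (∀ s k, ξ s k = 0 ∨ ξ s k = 1) ∧ ∀ k, ∃! s, ξ s k = 1 := by
  have hbin : ∀ s k, ξ s k = 0 ∨ ξ s k = 1 := by
    intro s k
    refine binary_of_le_vertices (fun s => ξ s k) (fun s => (y k - x k ⬝ᵥ θ s) ^ 2)
      (fun s => hfeas.1 s k) (hfeas.2 k) (fun j => ?_) s
    -- Compare with the point obtained by moving column `k` to the vertex `j`.
    have hm := hmin (fun s i => if i = k then (if s = j then 1 else 0) else ξ s i) (by
      refine ⟨fun s i => ?_, fun i => ?_⟩
      · by_cases hi : i = k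
        · by_cases hs : s = j <;> simp [hi, hs]
        · simpa [hi] using hfeas.1 s i
      · by_cases hi : i = k
        · simp [hi]
        · simpa [hi] using hfeas.2 i)
    by_contra! hlt
    refine absurd hm (not_le.2 (Finset.sum_lt_sum (fun i _ => ?_) ⟨k, Finset.mem_univ k, ?_⟩))
    · by_cases hi : i = k
      · subst hi
        simpa using hlt.le
      · simp [hi]
    · simpa using hlt
  refine ⟨hbin, fun k => ?_⟩
  obtain ⟨s, hs⟩ : ∃ s, ξ s k = 1 := by
    by_contra! hne
    have hz : ∑ s, ξ s k = 0 :=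
      Finset.sum_eq_zero fun s _ => (hbin s k).resolve_right (hne s)
    linarith [hfeas.2 k]
  refine ⟨s, hs, fun t ht => ?_⟩
  by_contra hts
  have hle : ∑ i ∈ {t, s}, ξ i k ≤ ∑ i, ξ i k :=
    Finset.sum_le_sum_of_subset_of_nonneg (Finset.subset_univ _) fun i _ _ => (hfeas.1 i k).1
  rw [Finset.sum_pair hts, hfeas.2 k] at hle
  have ht' : ξ t k = 1 := ht
  linarith
end

section
/- The set of global minimizers of the integer problem — minimize J(θ, ξ) = ∑_{k=1}^N ∑_{s=1}^S ξ_{s,k}(y_k − x_kᵀθ_s)² over θ_s ∈ ℝⁿ and ξ_{s,k} ∈ {0,1} with ∑_{s=1}^S ξ_{s,k} = 1 for every k — coincides with the set of global minimizers of the relaxed penalized problem — minimize F(θ, ξ) = ∑_{k=1}^N [ ∑_{s=1}^S ξ_{s,k}(y_k − x_kᵀθ_s)² + (1 − ∑_{s=1}^S ξ_{s,k}²) ] over θ_s ∈ ℝⁿ and 0 ≤ ξ_{s,k} ≤ 1 with ∑_{s=1}^S ξ_{s,k} = 1 for every k — and the two optimal values are equal. -/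
/-!
The penalized cost is `F = J + P`, where the penalty `P ξ = ∑ₖ (1 - ∑ₛ ξₛₖ²)` is nonnegative on the
relaxed feasible set and vanishes there exactly at the binary points, because
`1 - ∑ₛ ξₛₖ² = ∑ₛ ξₛₖ (1 - ξₛₖ)` has nonnegative summands. On the other hand, `J` alone does not
increase when, for each `k`, the convex weights `ξ₋ₖ` are replaced by the indicator of an index `s`
with smallest squared residual (`exists_intFeas_Jcost_le`). Hence every relaxed point is dominated
in cost by a binary one, strictly so if it is not binary itself; both the equality of the minimizer
sets and that of the optimal values follow.
-/

open Matrix Finset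

/-- The identification cost `J` of the integer problem. -/
noncomputable def Jcost {n S N : ℕ} (x : Fin N → Fin n → ℝ) (y : Fin N → ℝ)
    (θ : Fin S → Fin n → ℝ) (ξ : Fin S → Fin N → ℝ) : ℝ :=
  ∑ k, ∑ s, ξ s k * (y k - x k ⬝ᵥ θ s) ^ 2

/-- The relaxed penalized cost `F`. -/
noncomputable def Fcost {n S N : ℕ} (x : Fin N → Fin n → ℝ) (y : Fin N → ℝ)
    (θ : Fin S → Fin n → ℝ) (ξ : Fin S → Fin N → ℝ) : ℝ :=
  ∑ k, ((∑ s, ξ s k * (y k - x k ⬝ᵥ θ s) ^ 2) + (1 - ∑ s, (ξ s k) ^ 2))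

/-- The feasible set of the integer problem: binary membership indices summing to one. -/
def IntFeas (S N : ℕ) : Set (Fin S → Fin N → ℝ) :=
  {ξ | (∀ s k, ξ s k = 0 ∨ ξ s k = 1) ∧ ∀ k, ∑ s, ξ s k = 1}

/-- The relaxed feasible set: membership indices in `[0,1]` summing to one. -/
def RelFeas (S N : ℕ) : Set (Fin S → Fin N → ℝ) :=
  {ξ | (∀ s k, 0 ≤ ξ s k ∧ ξ s k ≤ 1) ∧ ∀ k, ∑ s, ξ s k = 1}

/-- The concave penalty by which the relaxed cost exceeds the identification cost. -/
noncomputable def penalty {S N : ℕ} (ξ : Fin S → Fin N → ℝ) : ℝ :=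
  ∑ k, (1 - ∑ s, (ξ s k) ^ 2)

lemma Fcost_eq {n S N : ℕ} (x : Fin N → Fin n → ℝ) (y : Fin N → ℝ)
    (θ : Fin S → Fin n → ℝ) (ξ : Fin S → Fin N → ℝ) :
    Fcost x y θ ξ = Jcost x y θ ξ + penalty ξ := by
  simp only [Fcost, Jcost, penalty, Finset.sum_add_distrib]

lemma IntFeas_subset_RelFeas {S N : ℕ} : IntFeas S N ⊆ RelFeas S N := by
  rintro ξ ⟨h, hs⟩
  refine ⟨fun s k => ?_, hs⟩
  rcases h s k with h | h <;> rw [h] <;> norm_num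

lemma penalty_eq {S N : ℕ} {ξ : Fin S → Fin N → ℝ} (h : ∀ k, ∑ s, ξ s k = 1) :
    penalty ξ = ∑ k, ∑ s, ξ s k * (1 - ξ s k) := by
  refine Finset.sum_congr rfl fun k _ => ?_
  simp only [mul_sub, mul_one, Finset.sum_sub_distrib, h k, sq]

lemma penalty_nonneg {S N : ℕ} {ξ : Fin S → Fin N → ℝ} (h : ξ ∈ RelFeas S N) :
    0 ≤ penalty ξ := by
  rw [penalty_eq h.2]
  exact Finset.sum_nonneg fun k _ => Finset.sum_nonneg fun s _ =>
    mul_nonneg (h.1 s k).1 (sub_nonneg.2 (h.1 s k).2)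

lemma penalty_eq_zero_iff {S N : ℕ} {ξ : Fin S → Fin N → ℝ} (h : ξ ∈ RelFeas S N) :
    penalty ξ = 0 ↔ ξ ∈ IntFeas S N := by
  have h0 : ∀ k s, 0 ≤ ξ s k * (1 - ξ s k) := fun k s =>
    mul_nonneg (h.1 s k).1 (sub_nonneg.2 (h.1 s k).2)
  rw [penalty_eq h.2, Finset.sum_eq_zero_iff_of_nonneg fun k _ =>
    Finset.sum_nonneg fun s _ => h0 k s]
  constructor
  · refine fun hz => ⟨fun s k => ?_, h.2⟩
    have hk := (Finset.sum_eq_zero_iff_of_nonneg fun s _ => h0 k s).1 (hz k (Finset.mem_univ k))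
      s (Finset.mem_univ s)
    rcases mul_eq_zero.1 hk with h1 | h1
    · exact Or.inl h1
    · exact Or.inr (sub_eq_zero.1 h1).symm
  · refine fun hi k _ => Finset.sum_eq_zero fun s _ => ?_
    rcases hi.1 s k with h1 | h1 <;> simp [h1]

lemma Fcost_eq_Jcost {n S N : ℕ} (x : Fin N → Fin n → ℝ) (y : Fin N → ℝ)
    (θ : Fin S → Fin n → ℝ) {ξ : Fin S → Fin N → ℝ} (h : ξ ∈ IntFeas S N) :
    Fcost x y θ ξ = Jcost x y θ ξ := by
  rw [Fcost_eq, (penalty_eq_zero_iff (IntFeas_subset_RelFeas h)).2 h, add_zero]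

/-- Assigning each data point to a submodel of smallest squared residual yields a binary point
whose identification cost is at most that of any relaxed point with the same parameters. -/
lemma exists_intFeas_Jcost_le {n S N : ℕ} (x : Fin N → Fin n → ℝ) (y : Fin N → ℝ)
    (θ : Fin S → Fin n → ℝ) {ξ : Fin S → Fin N → ℝ} (h : ξ ∈ RelFeas S N) :
    ∃ ξ' ∈ IntFeas S N, Jcost x y θ ξ' ≤ Jcost x y θ ξ := by
  have hm : ∀ k, ∃ t : Fin S, ∀ s, (y k - x k ⬝ᵥ θ t) ^ 2 ≤ (y k - x k ⬝ᵥ θ s) ^ 2 := by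
    intro k
    -- The weights at `k` sum to one, so there is at least one submodel.
    have : Nonempty (Fin S) := by
      by_contra hE
      rw [not_nonempty_iff] at hE
      simpa using h.2 k
    exact Finite.exists_min fun s => (y k - x k ⬝ᵥ θ s) ^ 2
  choose t ht using hm
  refine ⟨fun s k => if s = t k then 1 else 0, ⟨fun s k => ?_, fun k => by simp⟩, ?_⟩
  · by_cases hs : s = t k <;> simp [hs]
  · refine Finset.sum_le_sum fun k _ => ?_
    calc ∑ s, (if s = t k then (1 : ℝ) else 0) * (y k - x k ⬝ᵥ θ s) ^ 2
        = ∑ s, ξ s k * (y k - x k ⬝ᵥ θ (t k)) ^ 2 := by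
          rw [← Finset.sum_mul, h.2 k]; simp
      _ ≤ ∑ s, ξ s k * (y k - x k ⬝ᵥ θ s) ^ 2 :=
          Finset.sum_le_sum fun s _ => mul_le_mul_of_nonneg_left (ht k s) (h.1 s k).1

/-- Proposition 3: the global minimizers of the integer problem coincide with the global
minimizers of the relaxed penalized problem, and the optimal values are equal. -/
theorem stmt_5 {n S N : ℕ} (x : Fin N → Fin n → ℝ) (y : Fin N → ℝ) :
    ({p : (Fin S → Fin n → ℝ) × (Fin S → Fin N → ℝ) |
        p.2 ∈ IntFeas S N ∧
        ∀ q : (Fin S → Fin n → ℝ) × (Fin S → Fin N → ℝ), q.2 ∈ IntFeas S N →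
          Jcost x y p.1 p.2 ≤ Jcost x y q.1 q.2} =
      {p : (Fin S → Fin n → ℝ) × (Fin S → Fin N → ℝ) |
        p.2 ∈ RelFeas S N ∧
        ∀ q : (Fin S → Fin n → ℝ) × (Fin S → Fin N → ℝ), q.2 ∈ RelFeas S N →
          Fcost x y p.1 p.2 ≤ Fcost x y q.1 q.2}) ∧
    sInf ((fun p : (Fin S → Fin n → ℝ) × (Fin S → Fin N → ℝ) => Jcost x y p.1 p.2) ''
        {p | p.2 ∈ IntFeas S N}) =
      sInf ((fun p : (Fin S → Fin n → ℝ) × (Fin S → Fin N → ℝ) => Fcost x y p.1 p.2) ''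
        {p | p.2 ∈ RelFeas S N}) := by
  constructor
  · ext p
    constructor
    · rintro ⟨hp, hmin⟩
      refine ⟨IntFeas_subset_RelFeas hp, fun q hq => ?_⟩
      obtain ⟨ξ', hξ', hle⟩ := exists_intFeas_Jcost_le x y q.1 hq
      rw [Fcost_eq_Jcost x y p.1 hp, Fcost_eq x y q.1 q.2]
      linarith [hmin (q.1, ξ') hξ', penalty_nonneg hq]
    · rintro ⟨hp, hmin⟩
      have hint : p.2 ∈ IntFeas S N := by
        obtain ⟨ξ', hξ', hle⟩ := exists_intFeas_Jcost_le x y p.1 hp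
        have hF := hmin (p.1, ξ') (IntFeas_subset_RelFeas hξ')
        rw [Fcost_eq_Jcost x y p.1 hξ', Fcost_eq x y p.1 p.2] at hF
        exact (penalty_eq_zero_iff hp).1 (le_antisymm (by linarith) (penalty_nonneg hp))
      refine ⟨hint, fun q hq => ?_⟩
      rw [← Fcost_eq_Jcost x y p.1 hint, ← Fcost_eq_Jcost x y q.1 hq]
      exact hmin q (IntFeas_subset_RelFeas hq)
  -- Mutual domination of the value sets also covers the infeasible case `S = 0 < N`, where both
  -- infima are taken over the empty set.
  · apply csInf_eq_csInf_of_forall_exists_le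
    · rintro _ ⟨p, hp, rfl⟩
      exact ⟨_, ⟨p, IntFeas_subset_RelFeas hp, rfl⟩, (Fcost_eq_Jcost x y p.1 hp).le⟩
    · rintro _ ⟨p, hp, rfl⟩
      obtain ⟨ξ', hξ', hle⟩ := exists_intFeas_Jcost_le x y p.1 hp
      refine ⟨_, ⟨(p.1, ξ'), hξ', rfl⟩, hle.trans ?_⟩
      change _ ≤ Fcost x y p.1 p.2
      rw [Fcost_eq]
      linarith [penalty_nonneg hp]
end
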